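/- Let R be a commutative Noetherian ring, 𝔞 an ideal of R, n ∈ {0, 1}, and M an R-module belonging to FD_{≤n}. Then M is 𝔞-cofinite if and only if Supp_R M ⊆ V(𝔞) and the R-module Ext^i_R(R/𝔞, M) is finitely generated for every integer 0 ≤ i ≤ n. -/

import Mathlib

open CategoryTheory

universe u

/-- The `R`-module `Ext^i_R(N, M)` for two `R`-modules (objects of `ModuleCat R`). -/
noncomputable def extObj {R : Type u} [CommRing R] (N M : ModuleCat.{u} R) (i : ℕ) :
    ModuleCat.{u} R :=
  ((Ext R (ModuleCat.{u} R) i).obj (Opposite.op N)).obj M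

/-- The `R`-module `Ext^i_R(R/𝔞, M)`. -/
noncomputable def extIdeal {R : Type u} [CommRing R] (𝔞 : Ideal R) (i : ℕ)
    (M : ModuleCat.{u} R) : ModuleCat.{u} R :=
  extObj (ModuleCat.of R (R ⧸ 𝔞)) M i

/-- An `R`-module `M` is `𝔞`-cofinite if `Supp_R M ⊆ V(𝔞)` and `Ext^i_R(R/𝔞, M)` is a finitely
generated `R`-module for every `i ≥ 0`. -/
def IsCofinite {R : Type u} [CommRing R] (𝔞 : Ideal R) (M : ModuleCat.{u} R) : Prop :=
  Module.support R M ⊆ PrimeSpectrum.zeroLocus (𝔞 : Set R) ∧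
    ∀ i : ℕ, Module.Finite R (extIdeal 𝔞 i M)

/-- The Krull dimension `dim_R M` of an `R`-module `M`: the Krull dimension of its support,
i.e. the supremum of `dim R/𝔭` over primes `𝔭` in the support of `M`. -/
noncomputable def moduleDim (R : Type u) [CommRing R] (M : Type u) [AddCommGroup M]
    [Module R M] : WithBot ℕ∞ :=
  Order.krullDim (Module.support R M)

/-- An `R`-module `M` is in `FD_{≤n}` if there is a finitely generated submodule `N ⊆ M`
with `dim_R (M/N) ≤ n`. -/
def MemFD (R : Type u) [CommRing R] (n : ℕ) (M : Type u) [AddCommGroup M] [Module R M] : Prop :=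
  ∃ N : Submodule R M, N.FG ∧ moduleDim R (M ⧸ N) ≤ (n : WithBot ℕ∞)

/-- An `R`-module `M` is `𝔞`-torsion if every element is annihilated by some power of `𝔞`. -/
def IsTorsionIdeal {R : Type u} [CommRing R] (𝔞 : Ideal R) (M : Type u) [AddCommGroup M]
    [Module R M] : Prop :=
  ∀ m : M, ∃ n : ℕ, ∀ a ∈ 𝔞 ^ n, a • m = 0

/-- The arithmetic rank of an ideal `𝔞`: the least `n` such that there exist `a₁, …, aₙ ∈ R`
with `Rad (a₁, …, aₙ) = Rad 𝔞`. -/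
noncomputable def arithRank {R : Type u} [CommRing R] (𝔞 : Ideal R) : ℕ :=
  sInf {n : ℕ | ∃ f : Fin n → R, (Ideal.span (Set.range f)).radical = 𝔞.radical}

/-!
Dividing `M` by a finitely generated submodule changes its Ext modules only by finitely generated
ones, so assume `dim M ≤ n` and argue by induction on `n`. For `x ∈ 𝔞`, multiplication by `x`
vanishes on `Ext(R/𝔞, M)`, so the Ext modules of `M` are controlled by those of the submodules
`(0 :_M x ^ k)` and of a single quotient `x ^ k M / x ^ (k + 1) M`. The former, whose Ext modules
inherit finite generation from those of `M` in degrees 0 and 1, are handled by Noetherian induction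
on the radical of the annihilator. As for the latter, `M_𝔭` is Artinian at each of the finitely many
minimal primes `𝔭` of the support, so for large `k` the quotient is not supported at any of them,
and its dimension is smaller than that of `M`.
-/

open Abelian

section ExtComparison

variable {R : Type u} [CommRing R] {N M : ModuleCat.{u} R}

lemma extMk_eq_zero_iff_of_prev (P : ProjectiveResolution N) {n i : ℕ}
    (hi : (ComplexShape.up ℕ).prev n = i) (f : P.complex.X n ⟶ M)
    (hf : P.complex.d (n + 1) n ≫ f = 0) :
    P.extMk f (n + 1) rfl hf = 0 ↔ ∃ g : P.complex.X i ⟶ M, P.complex.d n i ≫ g = f := by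
  cases n with
  | succ n => exact P.extMk_eq_zero_iff f _ rfl hf i (by simp [← hi])
  | zero =>
    have hX : Limits.IsZero (P.cochainComplex.X 1) := P.cochainComplex.isZero_of_isStrictlyLE 0 1
    rw [← P.extEquivCohomologyClass.apply_eq_iff_eq, P.extEquivCohomologyClass_extMk,
      P.extEquivCohomologyClass_zero, CochainComplex.HomComplex.CohomologyClass.mk_eq_zero_iff,
      CochainComplex.HomComplex.Cocycle.toSingleMk_mem_coboundaries_iff _ _ _ _ _ 1 (by lia)]
    constructor
    · rintro ⟨g, hg⟩
      refine ⟨0, ?_⟩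
      rw [← cancel_epi (P.cochainComplexXIso (-(0 : ℕ)) 0 rfl).hom, ← hg, hX.eq_of_src g 0]
      simp
    · rintro ⟨g, rfl⟩
      exact ⟨0, by simp⟩

lemma smul_extMk (P : ProjectiveResolution N) {n : ℕ} (r : R) (f : P.complex.X n ⟶ M)
    (hf : P.complex.d (n + 1) n ≫ f = 0) :
    r • P.extMk f (n + 1) rfl hf = P.extMk (r • f) (n + 1) rfl (by simp [hf]) := by
  rw [Ext.smul_eq_comp_mk₀, P.extMk_comp_mk₀]
  simp

/-- The `R`-linear map sending a cocycle of `Hom(P, M)`, for `P` a projective resolution of `N`,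
to its class in `Ext^n(N, M)`. -/
noncomputable def cocycleToExt (P : ProjectiveResolution N) (n : ℕ) :
    LinearMap.ker (Linear.leftComp R M (P.complex.d (n + 1) n)) →ₗ[R] Abelian.Ext N M n where
  toFun f := P.extMk f.1 (n + 1) rfl f.2
  map_add' _ _ := (P.add_extMk _ _ _ _ _ _).symm
  map_smul' r f := (smul_extMk P r f.1 f.2).symm

lemma cocycleToExt_surjective (P : ProjectiveResolution N) (n : ℕ) :
    Function.Surjective (cocycleToExt (M := M) P n) := fun α ↦
  let ⟨f, hf, h⟩ := P.extMk_surjective α (n + 1) rfl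
  ⟨⟨f, hf⟩, h⟩

/-- The Ext modules defined as derived functors agree with those defined through the derived
category, in which Mathlib states the long exact sequences. -/
noncomputable def extObjEquiv (N M : ModuleCat.{u} R) (n : ℕ) :
    extObj N M n ≃ₗ[R] Abelian.Ext N M n := by
  let P := (HasProjectiveResolution.out (Z := N)).some
  let i := (ComplexShape.up ℕ).prev n
  let S := (P.complex.linearYonedaObj R M).sc' i n (n + 1)
  let φ : LinearMap.ker S.g.hom →ₗ[R] Abelian.Ext N M n := cocycleToExt P n
  have ker_φ : LinearMap.ker φ = LinearMap.range S.moduleCatToCycles := by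
    ext f
    exact (extMk_eq_zero_iff_of_prev P rfl f.1 f.2).trans
      (exists_congr fun g ↦ (Subtype.ext_iff (a1 := S.moduleCatToCycles g) (a2 := f)).symm)
  let homologyIso : extObj N M n ≅ S.moduleCatLeftHomologyData.H :=
    P.isoExt n M ≪≫ ShortComplex.homologyMapIso
      ((P.complex.linearYonedaObj R M).isoSc' i n (n + 1) rfl (by simp)) ≪≫
      ShortComplex.moduleCatHomologyIso _
  exact homologyIso.toLinearEquiv ≪≫ₗ (Submodule.quotEquivOfEq _ _ ker_φ).symm ≪≫ₗ
    φ.quotKerEquivOfSurjective (cocycleToExt_surjective P n)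

end ExtComparison

section NoetherianExt

variable {R : Type u} [CommRing R]

lemma isNoetherian_of_exact {A B C : Type*} [AddCommGroup A] [AddCommGroup B] [AddCommGroup C]
    [Module R A] [Module R B] [Module R C] {f : A →ₗ[R] B} {g : B →ₗ[R] C}
    (h : Function.Exact f g) (_ : IsNoetherian R A) (_ : IsNoetherian R C) :
    IsNoetherian R B :=
  isNoetherian_of_range_eq_ker f g (LinearMap.exact_iff.1 h).symm

/-- The `R`-module `Ext^i_R(N, M)` is Noetherian; over a Noetherian ring this is finite generation,
in the form that passes along long exact sequences. -/
def NoetherianExt (N : ModuleCat.{u} R) (i : ℕ) (M : Type u) [AddCommGroup M] [Module R M] :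
    Prop :=
  IsNoetherian R (Abelian.Ext N (ModuleCat.of R M) i)

variable {N : ModuleCat.{u} R} {A B C : Type u} [AddCommGroup A] [AddCommGroup B]
  [AddCommGroup C] [Module R A] [Module R B] [Module R C]

lemma NoetherianExt.of_finite [IsNoetherianRing R] [Module.Finite R N] [Module.Finite R A]
    (i : ℕ) : NoetherianExt N i A :=
  have : Module.Finite R (ModuleCat.of R A) := ‹Module.Finite R A›
  isNoetherian_of_isNoetherianRing_of_finite R (Abelian.Ext N (ModuleCat.of R A) i)

lemma noetherianExt_iff_finite_extObj [IsNoetherianRing R] {M : ModuleCat.{u} R} {i : ℕ} :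
    NoetherianExt N i M ↔ Module.Finite R (extObj N M i) := by
  rw [Module.Finite.equiv_iff (extObjEquiv N M i)]
  exact ⟨fun h ↦ ⟨h.noetherian ⊤⟩, fun _ ↦ isNoetherian_of_isNoetherianRing_of_finite R _⟩

section LongExactSequence

variable {f : A →ₗ[R] B} {g : B →ₗ[R] C}

lemma shortExact_of_exact (hf : Function.Injective f) (hg : Function.Surjective g)
    (h : Function.Exact f g) :
    (ModuleCat.shortComplexOfCompEqZero f g h.linearMap_comp_eq_zero).ShortExact :=
  ModuleCat.shortComplex_shortExact _ h hf hg

lemma NoetherianExt.of_injective (hf : Function.Injective f) (hB : NoetherianExt N 0 B) :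
    NoetherianExt N 0 A :=
  have : Mono (ModuleCat.ofHom f) := (ModuleCat.mono_iff_injective _).2 hf
  have : IsNoetherian R (Abelian.Ext N (ModuleCat.of R B) 0) := hB
  isNoetherian_of_injective
    ((Abelian.Ext.mk₀ (ModuleCat.ofHom f)).postcompOfLinear R N (add_zero 0))
    (Ext.postcomp_mk₀_injective_of_mono N (ModuleCat.ofHom f))

lemma NoetherianExt.of_exact₁ (hf : Function.Injective f) (hg : Function.Surjective g)
    (h : Function.Exact f g) {i : ℕ} (hC : NoetherianExt N i C)
    (hB : NoetherianExt N (i + 1) B) : NoetherianExt N (i + 1) A :=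
  isNoetherian_of_exact
    (f := (shortExact_of_exact hf hg h).extClass.postcompOfLinear R N rfl)
    (g := (Abelian.Ext.mk₀ (ModuleCat.ofHom f)).postcompOfLinear R N (add_zero (i + 1)))
    ((ShortComplex.ab_exact_iff_function_exact _).1 (Ext.covariant_sequence_exact₁' N _ i _ rfl))
    hC hB

lemma NoetherianExt.of_exact₂ (hf : Function.Injective f) (hg : Function.Surjective g)
    (h : Function.Exact f g) {i : ℕ} (hA : NoetherianExt N i A) (hC : NoetherianExt N i C) :
    NoetherianExt N i B :=
  isNoetherian_of_exact
    (f := (Abelian.Ext.mk₀ (ModuleCat.ofHom f)).postcompOfLinear R N (add_zero i))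
    (g := (Abelian.Ext.mk₀ (ModuleCat.ofHom g)).postcompOfLinear R N (add_zero i))
    ((ShortComplex.ab_exact_iff_function_exact _).1
      (Ext.covariant_sequence_exact₂' N (shortExact_of_exact hf hg h) i))
    hA hC

lemma NoetherianExt.of_exact₃ (hf : Function.Injective f) (hg : Function.Surjective g)
    (h : Function.Exact f g) {i : ℕ} (hB : NoetherianExt N i B)
    (hA : NoetherianExt N (i + 1) A) : NoetherianExt N i C :=
  isNoetherian_of_exact
    (f := (Abelian.Ext.mk₀ (ModuleCat.ofHom g)).postcompOfLinear R N (add_zero i))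
    (g := (shortExact_of_exact hf hg h).extClass.postcompOfLinear R N rfl)
    ((ShortComplex.ab_exact_iff_function_exact _).1
      (Ext.covariant_sequence_exact₃' N (shortExact_of_exact hf hg h) i _ rfl))
    hB hA

end LongExactSequence

lemma NoetherianExt.of_submodule {P : Submodule R A} {i : ℕ} (hP : NoetherianExt N i P)
    (hQ : NoetherianExt N i (A ⧸ P)) : NoetherianExt N i A :=
  .of_exact₂ P.subtype_injective P.mkQ_surjective (LinearMap.exact_subtype_mkQ P) hP hQ

lemma NoetherianExt.quotient {P : Submodule R A} {i : ℕ} (hA : NoetherianExt N i A)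
    (hP : NoetherianExt N (i + 1) P) : NoetherianExt N i (A ⧸ P) :=
  .of_exact₃ P.subtype_injective P.mkQ_surjective (LinearMap.exact_subtype_mkQ P) hA hP

end NoetherianExt

section TorsionBy

open Submodule
open scoped Pointwise

variable {R : Type*} [CommRing R]

/-- Multiplication by `x` as a map from `M` onto `xM`. -/
def toSMulTop (x : R) (M : Type*) [AddCommGroup M] [Module R M] :
    M →ₗ[R] (x • ⊤ : Submodule R M) :=
  (DistribSMul.toLinearMap R M x).codRestrict _ fun _ ↦ mem_map_of_mem trivial

variable (x y : R) (M : Type*) [AddCommGroup M] [Module R M]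

lemma toSMulTop_surjective : Function.Surjective (toSMulTop x M) := by
  rintro ⟨_, m, -, rfl⟩
  exact ⟨m, rfl⟩

lemma exact_subtype_toSMulTop : Function.Exact (torsionBy R M x).subtype (toSMulTop x M) := by
  rw [LinearMap.exact_iff, toSMulTop, LinearMap.ker_codRestrict, range_subtype, torsionBy]

variable {M} in
lemma mkQ_mem_torsionBy_quotient_torsionBy {m : M} :
    (torsionBy R M y).mkQ m ∈ torsionBy R (M ⧸ torsionBy R M y) x ↔
      m ∈ torsionBy R M (x * y) := by
  rw [mem_torsionBy_iff, ← map_smul, mkQ_apply, Submodule.Quotient.mk_eq_zero,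
    mem_torsionBy_iff, mem_torsionBy_iff, smul_smul, mul_comm]

/-- The projection `(0 :_M xy) → (0 :_{M / (0 :_M y)} x)`. -/
def torsionByMkQ :
    torsionBy R M (x * y) →ₗ[R] torsionBy R (M ⧸ torsionBy R M y) x :=
  (torsionBy R M y).mkQ.restrict fun _ ↦ (mkQ_mem_torsionBy_quotient_torsionBy x y).2

lemma torsionByMkQ_surjective : Function.Surjective (torsionByMkQ x y M) := by
  rintro ⟨w, hw⟩
  obtain ⟨m, rfl⟩ := Submodule.Quotient.mk_surjective _ w
  exact ⟨⟨m, (mkQ_mem_torsionBy_quotient_torsionBy x y).1 hw⟩, rfl⟩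

lemma exact_inclusion_torsionByMkQ :
    Function.Exact (inclusion (torsionBy_le_torsionBy_of_dvd y (x * y) (Dvd.intro_left x rfl)))
      (torsionByMkQ x y M) := by
  rw [LinearMap.exact_iff, torsionByMkQ, LinearMap.ker_restrict, range_inclusion,
    ker_mkQ]

end TorsionBy

section MulExt

open Submodule
open scoped Pointwise

variable {R : Type u} [CommRing R] {N : ModuleCat.{u} R} {M : Type u} [AddCommGroup M] [Module R M]

lemma NoetherianExt.torsionBy_one (x : R) (h₀ : NoetherianExt N 0 M) (h₁ : NoetherianExt N 1 M) :
    NoetherianExt N 1 (torsionBy R M x) :=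
  .of_exact₁ (subtype_injective _) (toSMulTop_surjective x M) (exact_subtype_toSMulTop x M)
    (.of_injective (subtype_injective _) h₀) h₁

lemma NoetherianExt.torsionBy_quotient_torsionBy {x y : R} {i : ℕ}
    (hxy : NoetherianExt N i (torsionBy R M (x * y)))
    (hy : NoetherianExt N (i + 1) (torsionBy R M y)) :
    NoetherianExt N i (torsionBy R (M ⧸ torsionBy R M y) x) :=
  .of_exact₃ (inclusion_injective _) (torsionByMkQ_surjective x y M)
    (exact_inclusion_torsionByMkQ x y M) hxy hy

lemma NoetherianExt.quotSMulTop {x : R} {i : ℕ} (h : NoetherianExt N i M)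
    (h' : NoetherianExt N (i + 1) M) (hx : NoetherianExt N (i + 2) (torsionBy R M x)) :
    NoetherianExt N i (QuotSMulTop x M) :=
  h.quotient (.of_exact₃ (subtype_injective _) (toSMulTop_surjective x M)
    (exact_subtype_toSMulTop x M) h' hx)

lemma isNoetherian_of_comp_eq_zero {A B C D : Type*} [AddCommGroup A] [AddCommGroup B]
    [AddCommGroup C] [AddCommGroup D] [Module R A] [Module R B] [Module R C] [Module R D]
    {f : A →ₗ[R] B} {δ : B →ₗ[R] C} {g : B →ₗ[R] A} {π : A →ₗ[R] D} (hf : Function.Exact f δ)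
    (hg : Function.Exact g π) (hgf : g ∘ₗ f = 0) (hC : IsNoetherian R C)
    (hD : IsNoetherian R D) : IsNoetherian R A := by
  have : IsNoetherian R (B ⧸ LinearMap.ker δ) :=
    isNoetherian_of_linearEquiv δ.quotKerEquivRange.symm
  have ker_le : LinearMap.ker δ ≤ LinearMap.ker g := by
    rw [LinearMap.exact_iff.1 hf, LinearMap.range_le_ker_iff, hgf]
  have hexact : Function.Exact ((LinearMap.ker δ).liftQ g ker_le) π := by
    rw [LinearMap.exact_iff, range_liftQ, LinearMap.exact_iff.1 hg]
  exact isNoetherian_of_exact hexact this hD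

/-- If `x` kills `N`, then multiplication by `x`, which factors as `M → xM → M`, induces the zero
map on `Ext(N, M)`. -/
lemma NoetherianExt.of_torsionBy_of_quotSMulTop {x : R} (hx : x ∈ Module.annihilator R N) {i : ℕ}
    (hK : NoetherianExt N (i + 1) (torsionBy R M x)) (hQ : NoetherianExt N i (QuotSMulTop x M)) :
    NoetherianExt N i M := by
  have hM := shortExact_of_exact (subtype_injective _) (toSMulTop_surjective x M)
    (exact_subtype_toSMulTop x M)
  have hxM := shortExact_of_exact (subtype_injective _) (mkQ_surjective _)
    (LinearMap.exact_subtype_mkQ (x • ⊤ : Submodule R M))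
  refine isNoetherian_of_comp_eq_zero
    (f := (Abelian.Ext.mk₀ (ModuleCat.ofHom (toSMulTop x M))).postcompOfLinear R N (add_zero i))
    (δ := hM.extClass.postcompOfLinear R N rfl)
    (g := (Abelian.Ext.mk₀ (ModuleCat.ofHom (x • ⊤ : Submodule R M).subtype)).postcompOfLinear
      R N (add_zero i))
    (π := (Abelian.Ext.mk₀ (ModuleCat.ofHom (x • ⊤ : Submodule R M).mkQ)).postcompOfLinear
      R N (add_zero i))
    ((ShortComplex.ab_exact_iff_function_exact _).1
      (Ext.covariant_sequence_exact₃' N hM i _ rfl))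
    ((ShortComplex.ab_exact_iff_function_exact _).1 (Ext.covariant_sequence_exact₂' N hxM i))
    ?_ hK hQ
  ext α
  have factor : ModuleCat.ofHom (toSMulTop x M) ≫ ModuleCat.ofHom (x • ⊤ : Submodule R M).subtype =
      x • 𝟙 (ModuleCat.of R M) := rfl
  have smul_eq_zero := ConcreteCategory.congr_hom
    (Ext.postcomp_smul_id_eq_zero_of_mem_annihilator (M := ModuleCat.of R M) hx i) α
  simpa [← factor] using smul_eq_zero

/-- The module `M' / x M'` with `M' = M / (0 :_M x ^ k)` stands for `x ^ k M / x ^ (k + 1) M`. -/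
lemma NoetherianExt.of_quotSMulTop_quotient_torsionBy {x : R}
    (hx : x ∈ Module.annihilator R N) (hK : ∀ k i, NoetherianExt N i (torsionBy R M (x ^ k)))
    {k : ℕ} (hQ : ∀ i, NoetherianExt N i (QuotSMulTop x (M ⧸ torsionBy R M (x ^ k)))) (i : ℕ) :
    NoetherianExt N i M :=
  .of_submodule (hK k i) <| .of_torsionBy_of_quotSMulTop hx
    (.torsionBy_quotient_torsionBy (pow_succ' x k ▸ hK (k + 1) (i + 1)) (hK k (i + 2))) (hQ i)

lemma NoetherianExt.quotSMulTop_quotient_torsionBy {x : R}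
    (hK : ∀ k i, NoetherianExt N i (torsionBy R M (x ^ k))) {i : ℕ} (h : NoetherianExt N i M)
    (h' : NoetherianExt N (i + 1) M) (k : ℕ) :
    NoetherianExt N i (QuotSMulTop x (M ⧸ torsionBy R M (x ^ k))) :=
  .quotSMulTop (h.quotient (hK k (i + 1))) (h'.quotient (hK k (i + 2)))
    (.torsionBy_quotient_torsionBy (pow_succ' x k ▸ hK (k + 1) (i + 2)) (hK k (i + 3)))

end MulExt

section TorsionInduction

open Submodule

variable {R : Type*} [CommRing R]

/-- Noetherian induction on the radical of the annihilator: if `x` does not lie in this radical,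
then it lies in the radicals attached to the submodules `(0 :_M x ^ k)`. -/
theorem torsionBy_pow_induction [IsNoetherianRing R] (𝔞 : Ideal R)
    {P : ∀ (M : Type u) [AddCommGroup M] [Module R M], Prop}
    (base : ∀ (M : Type u) [AddCommGroup M] [Module R M],
      𝔞 ≤ (Module.annihilator R M).radical → P M)
    (step : ∀ (M : Type u) [AddCommGroup M] [Module R M], ∀ x ∈ 𝔞,
      (∀ k : ℕ, P (torsionBy R M (x ^ k))) → P M)
    (M : Type u) [AddCommGroup M] [Module R M] : P M := by
  induction hI : (Module.annihilator R M).radical using WellFoundedGT.induction generalizing M with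
  | _ I ih =>
  by_cases h𝔞 : 𝔞 ≤ I
  · exact base M (hI ▸ h𝔞)
  obtain ⟨x, hx𝔞, hxI⟩ := SetLike.not_le_iff_exists.1 h𝔞
  refine step M x hx𝔞 fun k ↦ ih _ (SetLike.lt_iff_le_and_exists.2 ⟨?_, x, ?_, hxI⟩) _ rfl
  · rw [← hI]
    exact Ideal.radical_mono (LinearMap.annihilator_le_of_injective _ (subtype_injective _))
  · exact ⟨k, Module.mem_annihilator.2 fun m ↦ smul_torsionBy (x ^ k) m⟩

lemma isNoetherian_torsionBySet_of_injective {A B : Type*} [AddCommGroup A] [AddCommGroup B]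
    [Module R A] [Module R B] {f : A →ₗ[R] B} (hf : Function.Injective f) (s : Set R)
    [IsNoetherian R (torsionBySet R B s)] : IsNoetherian R (torsionBySet R A s) := by
  have map_mem (a : A) (ha : a ∈ torsionBySet R A s) : f a ∈ torsionBySet R B s := by
    rw [mem_torsionBySet_iff] at ha ⊢
    intro r
    rw [← map_smul, ha, map_zero]
  exact isNoetherian_of_injective (f.restrict map_mem) fun a b hab ↦
    Subtype.ext (hf (congrArg Subtype.val hab))

variable {M : Type*} [AddCommGroup M] [Module R M]

lemma isNoetherian_of_torsionBySet_of_smul_mem {s : Set R} [Finite s]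
    [IsNoetherian R (torsionBySet R M s)] (N : Submodule R M) [IsNoetherian R N]
    (h : ∀ r ∈ s, ∀ m : M, r • m ∈ N) : IsNoetherian R M := by
  let φ : M →ₗ[R] (s → N) :=
    LinearMap.pi fun r ↦ (DistribSMul.toLinearMap R M (r : R)).codRestrict N (h r r.2)
  refine isNoetherian_of_range_eq_ker (torsionBySet R M s).subtype φ ?_
  ext m
  rw [range_subtype, mem_torsionBySet_iff, LinearMap.mem_ker, funext_iff]
  exact forall_congr' fun r ↦ (ZeroMemClass.coe_eq_zero (x := φ m r))

lemma isNoetherian_of_pow_le_annihilator {𝔞 : Ideal R} (h𝔞 : 𝔞.FG) {k : ℕ}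
    (hk : 𝔞 ^ k ≤ Module.annihilator R M) [IsNoetherian R (torsionBySet R M 𝔞)] :
    IsNoetherian R M := by
  induction k generalizing M with
  | zero =>
    rw [pow_zero, Ideal.one_eq_top, top_le_iff, Module.annihilator_eq_top_iff] at hk
    infer_instance
  | succ k ih =>
    let N : Submodule R M := 𝔞 • ⊤
    have : IsNoetherian R (torsionBySet R N 𝔞) :=
      isNoetherian_torsionBySet_of_injective N.subtype_injective _
    have : IsNoetherian R N := ih <| by
      rwa [← annihilator, le_annihilator_iff, ← mul_smul, ← pow_succ, ← le_annihilator_iff,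
        annihilator_top]
    obtain ⟨s, rfl⟩ := h𝔞
    have : IsNoetherian R (torsionBySet R M (s : Set R)) := by
      rwa [torsionBySet_eq_torsionBySet_span]
    exact isNoetherian_of_torsionBySet_of_smul_mem (s := s) N fun r hr m ↦
      smul_mem_smul (subset_span hr) trivial

lemma isNoetherian_of_le_radical_annihilator [IsNoetherianRing R] {𝔞 : Ideal R}
    (h : 𝔞 ≤ (Module.annihilator R M).radical) [IsNoetherian R (torsionBySet R M 𝔞)] :
    IsNoetherian R M :=
  have ⟨_, hk⟩ := Ideal.exists_pow_le_of_le_radical_of_fg h 𝔞.fg_of_isNoetherianRing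
  isNoetherian_of_pow_le_annihilator 𝔞.fg_of_isNoetherianRing hk

end TorsionInduction

section Artinian

open Submodule Filter
open scoped Pointwise

lemma eventually_forall_eq_of_antitone {α : Type*} [PartialOrder α] [WellFoundedLT α]
    {F : ℕ → ℕ → α} (hF₁ : ∀ k, Antitone fun j ↦ F j k) (hF₂ : ∀ j, Antitone (F j)) :
    ∀ᶠ i in atTop, ∀ j ≥ i, ∀ k, F j k = F i k := by
  have stable (f : ℕ → α) (hf : Antitone f) : ∀ᶠ i in atTop, ∀ j ≥ i, f j = f i := by
    obtain ⟨n, hn⟩ := WellFoundedGT.monotone_chain_condition ⟨OrderDual.toDual ∘ f, hf.dual_right⟩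
    filter_upwards [eventually_ge_atTop n] with i hi j hj
    exact (hn j (hi.trans hj)).symm.trans (hn i hi)
  obtain ⟨K, hK⟩ := (stable (fun j ↦ F j j) fun i j hij ↦
    (hF₁ j hij).trans (hF₂ i hij)).exists
  have small_k : ∀ᶠ i in atTop, ∀ k < K, ∀ j ≥ i, F j k = F i k :=
    (Set.finite_Iio K).eventually_all.2 fun k _ ↦ stable _ (hF₁ k)
  filter_upwards [small_k, eventually_ge_atTop K] with i hi hKi j hj k
  obtain hk | hk := lt_or_ge k K
  · exact hi k hk j hj
  · have const (i) (hi : K ≤ i) : F i k = F K K :=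
      le_antisymm ((hF₁ k hi).trans (hF₂ K hk)) <| (hK (max i k) (le_max_of_le_left hi)).ge.trans <|
        (hF₁ _ (le_max_left i k)).trans (hF₂ _ (le_max_right i k))
    rw [const j (hKi.trans hj), const i hKi]

variable {R M : Type*} [CommRing R] [AddCommGroup M] [Module R M]

lemma le_of_smul_pow_inf_torsionBy_le {x : R} (hx : ∀ m : M, ∃ k : ℕ, x ^ k • m = 0)
    {N N' : Submodule R M} (h : N' ≤ N)
    (hN : ∀ k : ℕ, x ^ k • N ⊓ torsionBy R M x ≤ x ^ k • N') : N ≤ N' := by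
  suffices ∀ k : ℕ, ∀ m ∈ N, x ^ k • m = 0 → m ∈ N' from
    fun m hm ↦ (hx m).elim fun k hk ↦ this k m hm hk
  intro k
  induction k with
  | zero =>
    intro m _ h0
    rw [pow_zero, one_smul] at h0
    exact h0 ▸ N'.zero_mem
  | succ k ih =>
    intro m hm hk
    have mem_torsionBy : x ^ k • m ∈ torsionBy R M x := by
      rwa [mem_torsionBy_iff, smul_smul, ← pow_succ']
    obtain ⟨z, hz, hzm⟩ := (mem_smul_pointwise_iff_exists _ _ _).1
      (hN k ⟨smul_mem_pointwise_smul m _ N hm, mem_torsionBy⟩)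
    have := ih (m - z) (sub_mem hm (h hz)) (by rw [smul_sub, hzm, sub_self])
    exact (sub_mem_iff_left N' hz).1 this

/-- The submodules `x ^ k N ∩ (0 :_M x)` decrease both in `k` and in `N`, and together they
determine the members of a chain. -/
theorem isArtinian_of_torsionBy (x : R) (hx : ∀ m : M, ∃ k : ℕ, x ^ k • m = 0)
    [IsArtinian R (torsionBy R M x)] : IsArtinian R M := by
  rw [← monotone_stabilizes_iff_artinian]
  intro C
  let N (j : ℕ) : Submodule R M := OrderDual.ofDual (C j)
  have N_anti : Antitone N := fun i j hij ↦ C.monotone hij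
  let F (j k : ℕ) : Submodule R (torsionBy R M x) := (x ^ k • N j).comap (torsionBy R M x).subtype
  have pow_smul_anti (j : ℕ) : Antitone fun k ↦ x ^ k • N j := fun k l hkl ↦ by
    obtain ⟨d, rfl⟩ := Nat.exists_eq_add_of_le hkl
    simp only [pow_add, mul_smul]
    exact smul_mono_right _ (smul_le_self_of_tower _ _)
  obtain ⟨i, hi⟩ := (eventually_forall_eq_of_antitone (F := F)
    (fun k i j hij ↦ comap_mono (smul_mono_right _ (N_anti hij)))
    (fun j k l hkl ↦ comap_mono (pow_smul_anti j hkl))).exists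
  refine ⟨i, fun j hj ↦ le_antisymm (α := Submodule R M) ?_ (N_anti hj)⟩
  refine le_of_smul_pow_inf_torsionBy_le hx (N_anti hj) fun k m hm ↦ ?_
  have : (⟨m, hm.2⟩ : torsionBy R M x) ∈ F i k := hm.1
  rwa [← hi j hj k] at this

lemma isArtinian_of_supportDim_le_zero [IsNoetherianRing R] [Module.Finite R M]
    (h : Module.supportDim R M ≤ 0) : IsArtinian R M := by
  let I := Module.annihilator R M
  have : Ring.KrullDimLE 0 (R ⧸ I) := by
    rwa [Ring.krullDimLE_iff, ← Module.supportDim_eq_ringKrullDim_quotient_annihilator]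
  have hI : Module.IsTorsionBySet R M I := fun m r ↦ Module.mem_annihilator.1 r.2 m
  let := hI.module
  have : Module.Finite (R ⧸ I) M := Module.Finite.of_restrictScalars_finite R (R ⧸ I) M
  have : IsArtinianRing (R ⧸ I) := IsNoetherianRing.isArtinianRing_of_krullDimLE_zero
  exact isArtinian_of_surjective_algebraMap (R := R ⧸ I) Ideal.Quotient.mk_surjective

end Artinian

section LocalizedModule

open Submodule PrimeSpectrum

variable {R : Type*} [CommRing R] {M : Type*} [AddCommGroup M] [Module R M]

lemma exists_pow_smul_eq_zero_of_support_subset {𝔞 : Ideal R}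
    (hM : Module.support R M ⊆ zeroLocus 𝔞) {x : R} (hx : x ∈ 𝔞) (m : M) :
    ∃ k : ℕ, x ^ k • m = 0 := by
  suffices x ∈ Ideal.radical (LinearMap.ker (LinearMap.toSpanSingleton R M m)) from this
  rw [Ideal.radical_eq_sInf, Ideal.mem_sInf]
  rintro p ⟨hp, hprime⟩
  have : (⟨p, hprime⟩ : PrimeSpectrum R) ∈ Module.support R M :=
    Module.mem_support_iff'.2 ⟨m, fun r hr hrm ↦ hr (hp hrm)⟩
  exact hM this hx

lemma support_localizedModule_subset (S : Submonoid R) :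
    Module.support (Localization S) (LocalizedModule S M) ⊆
      PrimeSpectrum.comap (algebraMap R (Localization S)) ⁻¹' Module.support R M := by
  intro q hq
  obtain ⟨w, hw⟩ := Module.mem_support_iff'.1 hq
  induction w using LocalizedModule.induction_on with
  | _ m s =>
  refine Module.mem_support_iff'.2 ⟨m, fun r hr hrm ↦ hw _ hr ?_⟩
  rw [algebraMap_smul, LocalizedModule.smul'_mk, hrm, LocalizedModule.zero_mk]

lemma supportDim_localizedModule_le_zero {p : PrimeSpectrum R}
    (hp : ∀ q ∈ Module.support R M, q ≤ p → q = p) :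
    Module.supportDim (Localization.AtPrime p.asIdeal)
      (LocalizedModule p.asIdeal.primeCompl M) ≤ 0 := by
  have comap_eq (q) (hq : q ∈ Module.support (Localization.AtPrime p.asIdeal)
      (LocalizedModule p.asIdeal.primeCompl M)) :
      PrimeSpectrum.comap (algebraMap R (Localization.AtPrime p.asIdeal)) q = p := by
    refine hp _ (support_localizedModule_subset _ hq) ?_
    exact (Ideal.comap_mono (IsLocalRing.le_maximalIdeal q.2.ne_top)).trans
      (IsLocalization.AtPrime.under_maximalIdeal _ p.asIdeal).le
  have : (Module.support (Localization.AtPrime p.asIdeal)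
      (LocalizedModule p.asIdeal.primeCompl M)).Subsingleton := fun q hq q' hq' ↦
    localization_comap_injective _ p.asIdeal.primeCompl
      ((comap_eq q hq).trans (comap_eq q' hq').symm)
  have := this.coe_sort
  exact Order.krullDim_nonpos_of_subsingleton

lemma torsionBy_localizedModule (S : Submonoid R) (x : R) :
    torsionBy (Localization S) (LocalizedModule S M) (algebraMap R _ x) =
      LinearMap.range (LocalizedModule.map S (torsionBy R M x).subtype) := by
  have exact : Function.Exact (LocalizedModule.map S (torsionBy R M x).subtype)
      (LocalizedModule.map S (DistribSMul.toLinearMap R M x)) :=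
    LocalizedModule.map_exact S _ _ (LinearMap.exact_subtype_ker_map _)
  rw [← exact.linearMap_ker_eq]
  ext w
  rw [mem_torsionBy_iff, LinearMap.mem_ker, algebraMap_smul]
  induction w using LocalizedModule.induction_on with
  | _ m s => rw [LocalizedModule.smul'_mk, LocalizedModule.map_mk, DistribSMul.toLinearMap_apply]

lemma isArtinian_localizedModule_of_torsionBy (S : Submonoid R) {x : R}
    (hx : ∀ m : M, ∃ k : ℕ, x ^ k • m = 0)
    [IsArtinian (Localization S) (LocalizedModule S (torsionBy R M x))] :
    IsArtinian (Localization S) (LocalizedModule S M) := by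
  have : IsArtinian (Localization S) (torsionBy (Localization S) (LocalizedModule S M)
      (algebraMap R _ x)) :=
    torsionBy_localizedModule (M := M) S x ▸ isArtinian_range _
  refine isArtinian_of_torsionBy (algebraMap R _ x) fun w ↦ ?_
  induction w using LocalizedModule.induction_on with
  | _ m s =>
  obtain ⟨k, hk⟩ := hx m
  exact ⟨k, by rw [← map_pow, algebraMap_smul, LocalizedModule.smul'_mk, hk,
    LocalizedModule.zero_mk]⟩

theorem isArtinian_localizedModule_of_support_subset [IsNoetherianRing R] {𝔞 : Ideal R}
    (hM : Module.support R M ⊆ zeroLocus 𝔞) [h𝔞 : IsNoetherian R (torsionBySet R M 𝔞)]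
    {p : PrimeSpectrum R} (hp : ∀ q ∈ Module.support R M, q ≤ p → q = p) :
    IsArtinian (Localization.AtPrime p.asIdeal) (LocalizedModule p.asIdeal.primeCompl M) := by
  refine torsionBy_pow_induction 𝔞 (P := fun M _ _ ↦
    Module.support R M ⊆ zeroLocus 𝔞 → IsNoetherian R (torsionBySet R M 𝔞) →
      (∀ q ∈ Module.support R M, q ≤ p → q = p) →
      IsArtinian (Localization.AtPrime p.asIdeal) (LocalizedModule p.asIdeal.primeCompl M))
    (fun M _ _ h _ _ hp ↦ ?_) (fun M _ _ x hx ih hM _ hp ↦ ?_) M hM h𝔞 hp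
  · have := isNoetherian_of_le_radical_annihilator h
    have : Module.Finite (Localization.AtPrime p.asIdeal)
        (LocalizedModule p.asIdeal.primeCompl M) :=
      inferInstanceAs (Module.Finite (Localization p.asIdeal.primeCompl) _)
    exact isArtinian_of_supportDim_le_zero (supportDim_localizedModule_le_zero hp)
  · have support_torsionBy (y : R) : Module.support R (torsionBy R M y) ⊆ Module.support R M :=
      Module.support_subset_of_injective _ (subtype_injective _)
    have := ih 1 (hM.trans' (support_torsionBy _))
      (isNoetherian_torsionBySet_of_injective (subtype_injective _) _)
      fun q hq ↦ hp q (support_torsionBy _ hq)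
    rw [pow_one] at this
    exact isArtinian_localizedModule_of_torsionBy _
      (exists_pow_smul_eq_zero_of_support_subset hM hx)

end LocalizedModule

section MinimalSupport

open Submodule PrimeSpectrum Filter

variable {R : Type*} [CommRing R] {M : Type*} [AddCommGroup M] [Module R M]

lemma exists_isAssociatedPrime_le_of_mem_support [IsNoetherianRing R] {p : PrimeSpectrum R}
    (hp : p ∈ Module.support R M) : ∃ q ≤ p.asIdeal, IsAssociatedPrime q M := by
  obtain ⟨m, hm⟩ := Module.mem_support_iff_exists_annihilator.1 hp
  obtain ⟨q, hq, hqp⟩ := Ideal.exists_minimalPrimes_le hm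
  exact ⟨q, hqp, IsAssociatedPrime.map_of_injective (f := (span R {m}).subtype)
    (Module.associatedPrimes.minimalPrimes_annihilator_subset_associatedPrimes R _ hq)
    (subtype_injective _)⟩

lemma support_torsionBySet_of_support_subset [IsNoetherianRing R] {𝔞 : Ideal R}
    (hM : Module.support R M ⊆ zeroLocus 𝔞) :
    Module.support R (torsionBySet R M 𝔞) = Module.support R M := by
  refine (Module.support_subset_of_injective _ (subtype_injective _)).antisymm fun p hp ↦ ?_
  obtain ⟨q, hqp, hq⟩ := exists_isAssociatedPrime_le_of_mem_support hp
  obtain ⟨hq_prime, m, rfl⟩ := isAssociatedPrime_iff.1 hq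
  have smul_eq_zero {r : R} (h : r • m = 0) : r ∈ (⊥ : Submodule R M).colon {m} := by
    rwa [mem_colon_singleton, Submodule.mem_bot]
  have h𝔞 : 𝔞 ≤ (⊥ : Submodule R M).colon {m} :=
    hM (Module.mem_support_iff'.2 ⟨m, fun r hr h ↦ hr (smul_eq_zero h)⟩ :
      (⟨_, hq_prime⟩ : PrimeSpectrum R) ∈ Module.support R M)
  have hm : m ∈ torsionBySet R M 𝔞 := (mem_torsionBySet_iff _ _).2 fun r ↦ by
    simpa only [mem_colon_singleton, Submodule.mem_bot] using h𝔞 r.2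
  exact Module.mem_support_iff'.2
    ⟨⟨m, hm⟩, fun r hr h ↦ hr (hqp (smul_eq_zero (congrArg Subtype.val h)))⟩

lemma finite_setOf_minimal_mem_support [IsNoetherianRing R] [Module.Finite R M] :
    {p | Minimal (· ∈ Module.support R M) p}.Finite := by
  refine .of_finite_image (f := asIdeal)
    ((Ideal.finite_minimalPrimes_of_isNoetherianRing R (Module.annihilator R M)).subset ?_)
    fun _ _ _ _ ↦ PrimeSpectrum.ext
  rintro _ ⟨p, hp, rfl⟩
  simp only [Module.mem_support_iff_of_finite] at hp
  exact ⟨⟨p.2, hp.1⟩, fun q ⟨hq, hMq⟩ hqp ↦ hp.2 (y := ⟨q, hq⟩) hMq hqp⟩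

lemma notMem_support_quotSMulTop_quotient_torsionBy {p : PrimeSpectrum R} {x : R} {k : ℕ}
    (h : ∀ m : M, ∃ t ∉ p.asIdeal, ∃ y : M, t • x ^ k • m = x ^ (k + 1) • y) :
    p ∉ Module.support R (QuotSMulTop x (M ⧸ torsionBy R M (x ^ k))) := by
  refine Module.notMem_support_iff'.2 fun w ↦ ?_
  obtain ⟨w, rfl⟩ := mkQ_surjective _ w
  obtain ⟨m, rfl⟩ := mkQ_surjective _ w
  obtain ⟨t, ht, y, hy⟩ := h m
  have mkQ_eq : t • (torsionBy R M (x ^ k)).mkQ m = x • (torsionBy R M (x ^ k)).mkQ y := by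
    rw [← map_smul, ← map_smul, ← sub_eq_zero, ← map_sub, mkQ_apply, Quotient.mk_eq_zero,
      mem_torsionBy_iff, smul_sub, smul_comm, hy, smul_smul, ← pow_succ, sub_self]
  refine ⟨t, ht, ?_⟩
  rw [← map_smul, mkQ_eq, mkQ_apply, Quotient.mk_eq_zero]
  exact smul_mem_pointwise_smul _ _ _ trivial

lemma antitone_support_quotSMulTop_quotient_torsionBy (x : R) :
    Antitone fun k : ℕ ↦ Module.support R (QuotSMulTop x (M ⧸ torsionBy R M (x ^ k))) :=
  fun _ _ hkl ↦ Module.support_subset_of_surjective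
    (QuotSMulTop.map x (factor (torsionBy_le_torsionBy_of_dvd _ _ (pow_dvd_pow x hkl))))
    (QuotSMulTop.map_surjective x (factor_surjective _))

lemma exists_notMem_support_quotSMulTop_quotient_torsionBy (x : R) {p : PrimeSpectrum R}
    [IsArtinian (Localization.AtPrime p.asIdeal) (LocalizedModule p.asIdeal.primeCompl M)] :
    ∃ k : ℕ, p ∉ Module.support R (QuotSMulTop x (M ⧸ torsionBy R M (x ^ k))) := by
  obtain ⟨k, hk⟩ := IsArtinian.range_smul_pow_stabilizes
    (R := Localization.AtPrime p.asIdeal) (LocalizedModule p.asIdeal.primeCompl M)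
    (algebraMap R _ x)
  refine ⟨k, notMem_support_quotSMulTop_quotient_torsionBy fun m ↦ ?_⟩
  have mem_range : algebraMap R (Localization.AtPrime p.asIdeal) x ^ k • LocalizedModule.mk m 1 ∈
      LinearMap.range (algebraMap R (Localization.AtPrime p.asIdeal) x ^ (k + 1) •
        (LinearMap.id : LocalizedModule p.asIdeal.primeCompl M →ₗ[_] _)) :=
    hk (k + 1) k.le_succ ▸ LinearMap.mem_range_self _ (LocalizedModule.mk m 1)
  obtain ⟨w, hw⟩ := mem_range
  induction w using LocalizedModule.induction_on with
  | _ y s =>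
  rw [LinearMap.smul_apply, LinearMap.id_apply, ← map_pow, ← map_pow, algebraMap_smul,
    algebraMap_smul, LocalizedModule.smul'_mk, LocalizedModule.smul'_mk,
    LocalizedModule.mk_eq] at hw
  obtain ⟨u, hu⟩ := hw
  refine ⟨u * s, (u * s).2, (u : R) • y, ?_⟩
  rw [smul_comm _ (u : R), mul_smul]
  simpa only [one_smul, Submonoid.smul_def] using hu.symm

theorem exists_forall_minimal_notMem_support [IsNoetherianRing R] {𝔞 : Ideal R}
    (hM : Module.support R M ⊆ zeroLocus 𝔞) [IsNoetherian R (torsionBySet R M 𝔞)] (x : R) :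
    ∃ k : ℕ, ∀ p, Minimal (· ∈ Module.support R M) p →
      p ∉ Module.support R (QuotSMulTop x (M ⧸ torsionBy R M (x ^ k))) := by
  have finite_minimal : {p | Minimal (· ∈ Module.support R M) p}.Finite :=
    support_torsionBySet_of_support_subset hM ▸ finite_setOf_minimal_mem_support
  refine (finite_minimal.eventually_all.2 fun p hp ↦ ?_ : ∀ᶠ k in atTop, _).exists
  have := isArtinian_localizedModule_of_support_subset hM
    fun q hq ↦ (hp : Minimal _ p).eq_of_le hq
  obtain ⟨k, hk⟩ := exists_notMem_support_quotSMulTop_quotient_torsionBy (M := M) (p := p) x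
  filter_upwards [eventually_ge_atTop k] with l hl hpl
  exact hk (antitone_support_quotSMulTop_quotient_torsionBy x hl hpl)

lemma krullDim_lt_of_forall_minimal_notMem {α : Type*} [Preorder α] {s t : Set α} (hts : t ⊆ s)
    (h : ∀ a, Minimal (· ∈ s) a → a ∉ t) {n : ℕ} (hs : Order.krullDim s < (n + 1 : ℕ)) :
    Order.krullDim t < n := by
  rw [Order.krullDim_lt_coe_iff] at hs ⊢
  intro l
  have not_minimal : ¬ Minimal (· ∈ s) (l.head : α) := fun hl ↦ h _ hl l.head.2
  obtain ⟨a, ha, has⟩ := (not_minimal_iff_exists_lt (hts l.head.2)).1 not_minimal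
  have : 0 + l.length + 1 < n + 1 :=
    hs ((l.map (Set.inclusion hts) fun _ _ h ↦ h).cons ⟨a, has⟩ ha)
  omega

end MinimalSupport

section Cofinite

open Submodule PrimeSpectrum

variable {R : Type u} [CommRing R] {𝔞 : Ideal R} {M : Type u} [AddCommGroup M] [Module R M]

lemma NoetherianExt.isNoetherian_torsionBySet (h : NoetherianExt (ModuleCat.of R (R ⧸ 𝔞)) 0 M) :
    IsNoetherian R (torsionBySet R M 𝔞) := by
  have : IsNoetherian R (Abelian.Ext (ModuleCat.of R (R ⧸ 𝔞)) (ModuleCat.of R M) 0) := h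
  have : IsNoetherian R ((R ⧸ 𝔞) →ₗ[R] M) := isNoetherian_of_linearEquiv <|
    Abelian.Ext.linearEquiv₀.trans <|
      ModuleCat.homLinearEquiv (S := R) (M := ModuleCat.of R (R ⧸ 𝔞)) (N := ModuleCat.of R M)
  let evalOne : ((R ⧸ 𝔞) →ₗ[R] M) →ₗ[R] M := LinearMap.applyₗ 1
  refine isNoetherian_of_le (t := LinearMap.range evalOne) fun m hm ↦
    ⟨liftQ 𝔞 (LinearMap.toSpanSingleton R M m) fun a ha ↦ ?_, one_smul R m⟩
  exact (mem_torsionBySet_iff _ _).1 hm ⟨a, ha⟩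

lemma NoetherianExt.torsionBy_of_le_two {N : ModuleCat.{u} R} {n : ℕ} (hn : n ≤ 2)
    (h : ∀ i < n, NoetherianExt N i M) (x : R) : ∀ i < n, NoetherianExt N i (torsionBy R M x)
  | 0, hi => .of_injective (subtype_injective _) (h 0 hi)
  | 1, hi => .torsionBy_one x (h 0 (by omega)) (h 1 hi)
  | i + 2, hi => by omega

lemma moduleDim_le_of_support_subset {A B : Type u} [AddCommGroup A] [AddCommGroup B] [Module R A]
    [Module R B] (h : Module.support R A ⊆ Module.support R B) : moduleDim R A ≤ moduleDim R B :=
  Order.krullDim_le_of_strictMono (Set.inclusion h) fun _ _ ↦ id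

lemma subsingleton_of_moduleDim_lt_zero (h : moduleDim R M < 0) : Subsingleton M := by
  rw [← Module.support_eq_empty_iff (R := R), ← Set.isEmpty_coe_sort, ← not_nonempty_iff]
  exact fun _ ↦ h.not_ge Order.krullDim_nonneg

theorem NoetherianExt.of_moduleDim_lt [IsNoetherianRing R] {n : ℕ} (hn : n ≤ 2)
    (hdim : moduleDim R M < n)
    (hsupp : Module.support R M ⊆ zeroLocus 𝔞)
    (hM : ∀ i < n, NoetherianExt (ModuleCat.of R (R ⧸ 𝔞)) i M) (i : ℕ) :
    NoetherianExt (ModuleCat.of R (R ⧸ 𝔞)) i M := by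
  have : Module.Finite R (ModuleCat.of R (R ⧸ 𝔞)) := inferInstanceAs (Module.Finite R (R ⧸ 𝔞))
  induction n generalizing M i with
  | zero =>
    have := subsingleton_of_moduleDim_lt_zero hdim
    exact .of_finite i
  | succ n ih =>
    refine torsionBy_pow_induction 𝔞 (P := fun M _ _ ↦ moduleDim R M < (n + 1 : ℕ) →
      Module.support R M ⊆ zeroLocus 𝔞 →
      (∀ i < n + 1, NoetherianExt (ModuleCat.of R (R ⧸ 𝔞)) i M) →
      ∀ i, NoetherianExt (ModuleCat.of R (R ⧸ 𝔞)) i M)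
      (fun M _ _ h _ _ hM i ↦ ?_) (fun M _ _ x hx ihM hdim hsupp hM i ↦ ?_) M hdim hsupp hM i
    · have := (hM 0 n.succ_pos).isNoetherian_torsionBySet
      have := isNoetherian_of_le_radical_annihilator h
      exact .of_finite i
    · have := (hM 0 n.succ_pos).isNoetherian_torsionBySet
      obtain ⟨k, hk⟩ := exists_forall_minimal_notMem_support hsupp x
      have support_torsionBy (k : ℕ) :
          Module.support R (torsionBy R M (x ^ k)) ⊆ Module.support R M :=
        Module.support_subset_of_injective _ (subtype_injective _)
      have support_quotSMulTop :
          Module.support R (QuotSMulTop x (M ⧸ torsionBy R M (x ^ k))) ⊆ Module.support R M :=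
        Module.support_subset_of_surjective (mkQ _ ∘ₗ mkQ _)
          ((mkQ_surjective _).comp (mkQ_surjective _))
      have hK (k : ℕ) := ihM k
        ((moduleDim_le_of_support_subset (support_torsionBy k)).trans_lt hdim)
        ((support_torsionBy k).trans hsupp) (.torsionBy_of_le_two hn hM _)
      refine .of_quotSMulTop_quotient_torsionBy (Ideal.annihilator_quotient.ge hx) hK
        (ih (by omega) (krullDim_lt_of_forall_minimal_notMem support_quotSMulTop hk hdim)
          (support_quotSMulTop.trans hsupp) fun j hj ↦ ?_) i
      exact .quotSMulTop_quotient_torsionBy hK (hM j (by omega)) (hM (j + 1) (by omega)) k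

end Cofinite

/-- Yang–Shen, Lemma 1.6: for `n ∈ {0,1}` and an `R`-module `M` in `FD_{≤n}`, `M` is
`𝔞`-cofinite if and only if `Supp_R M ⊆ V(𝔞)` and `Ext^i_R(R/𝔞, M)` is finitely generated
for all `i ≤ n`. -/
theorem isCofinite_iff_of_memFD
    {R : Type u} [CommRing R] [IsNoetherianRing R] (𝔞 : Ideal R) (n : ℕ) (hn : n = 0 ∨ n = 1)
    (M : ModuleCat.{u} R) (hM : MemFD R n M) :
    IsCofinite 𝔞 M ↔
      (Module.support R M ⊆ PrimeSpectrum.zeroLocus (𝔞 : Set R) ∧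
        ∀ i : ℕ, i ≤ n → Module.Finite R (extIdeal 𝔞 i M)) := by
  refine ⟨fun h ↦ ⟨h.1, fun i _ ↦ h.2 i⟩, fun ⟨hsupp, hfin⟩ ↦ ⟨hsupp, fun i ↦ ?_⟩⟩
  obtain ⟨N₀, hN₀, hdim⟩ := hM
  have : Module.Finite R N₀ := .of_fg hN₀
  have : Module.Finite R (ModuleCat.of R (R ⧸ 𝔞)) := inferInstanceAs (Module.Finite R (R ⧸ 𝔞))
  have hQ : ∀ j < n + 1, NoetherianExt (ModuleCat.of R (R ⧸ 𝔞)) j (M ⧸ N₀) := fun j hj ↦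
    (noetherianExt_iff_finite_extObj.2 (hfin j (Nat.lt_succ_iff.1 hj))).quotient (.of_finite _)
  have hQ' : NoetherianExt (ModuleCat.of R (R ⧸ 𝔞)) i (M ⧸ N₀) :=
    .of_moduleDim_lt (by omega) (hdim.trans_lt (by exact_mod_cast n.lt_succ_self))
      ((Module.support_subset_of_surjective _ N₀.mkQ_surjective).trans hsupp) hQ i
  exact noetherianExt_iff_finite_extObj.1 (.of_submodule (.of_finite i) hQ')
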